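/- With the data and global duality hypothesis of the abstract Selmer setup, assume in addition that Sel(F∩G) is finite-dimensional over 𝔽_p. Then dim_{𝔽_p} Sel(F+G) ≡ dim_{𝔽_p} (Sel(F) + Sel(G)) (mod 2). -/

import Mathlib

open Module Submodule

/-
The induced forms make `B̄ = ⊕ (F_v + G_v)/(F_v ∩ G_v)` a symmetric space which is the direct sum
of the two isotropic subspaces `F̄ = ⊕ F_v/(F_v ∩ G_v)` and `Ḡ = ⊕ G_v/(F_v ∩ G_v)`. Let `φ` be the
localization map from `Sel(F+G)` to `B̄` and `π` the projection of `B̄` onto `F̄` along `Ḡ`. Because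
`F̄`, `Ḡ` and the image `C` of `φ` are all isotropic, `ω(x, y) = β(π (φ x), φ y)` is skew-symmetric
on `Sel(F+G)`, so it has even rank. An `x` is in its kernel exactly when `π (φ x) ∈ C^⊥ = C`, that
is, when the two components of `φ x` both come from `Sel(F+G)`; the kernel is therefore
`φ⁻¹(F̄) + φ⁻¹(Ḡ) = Sel(F) + Sel(G)`.
-/

section SkewForm

theorem even_card_of_transpose_eq_neg_of_det_ne_zero {R n : Type*} [CommRing R] [NoZeroDivisors R]
    [Fintype n] [DecidableEq n] (h2 : (2 : R) ≠ 0) {M : Matrix n n R}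
    (hM : M.transpose = -M) (hdet : M.det ≠ 0) : Even (Fintype.card n) := by
  by_contra hodd
  have hneg : M.det = -M.det := calc
    M.det = M.transpose.det := M.det_transpose.symm
    _ = (-1) ^ Fintype.card n * M.det := by rw [hM, Matrix.det_neg]
    _ = -M.det := by rw [(Nat.not_even_iff_odd.mp hodd).neg_one_pow, neg_one_mul]
  have htwo : 2 * M.det = 0 := by linear_combination hneg
  exact mul_ne_zero h2 hdet htwo

theorem nondegenerate_restrict_of_isCompl_ker {R M : Type*} [CommRing R] [AddCommGroup M]
    [Module R M] {ω : LinearMap.BilinForm R M} (hω : ω.IsRefl) {W : Submodule R M}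
    (hW : IsCompl (LinearMap.ker ω) W) : (ω.restrict W).Nondegenerate := by
  refine ω.nondegenerate_restrict_of_disjoint_orthogonal hω (disjoint_def.mpr fun x hxW hx => ?_)
  have hker : x ∈ LinearMap.ker ω := by
    refine LinearMap.mem_ker.mpr (LinearMap.ext fun y => ?_)
    obtain ⟨k, w, hk, hw, rfl⟩ := codisjoint_iff_exists_add_eq.mp hW.codisjoint y
    have hxk : ω x k = 0 := hω k x (by rw [LinearMap.mem_ker.mp hk, LinearMap.zero_apply])
    have hxw : ω x w = 0 := hω w x (hx w hw)
    rw [map_add, hxk, hxw, add_zero, LinearMap.zero_apply]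
  exact disjoint_def.mp hW.disjoint x hker hxW

variable {K V : Type*} [Field K] [AddCommGroup V] [Module K V] [FiniteDimensional K V]
  {ω : LinearMap.BilinForm K V}

theorem even_finrank_of_skew_of_nondegenerate (h2 : (2 : K) ≠ 0)
    (hskew : ∀ x y, ω x y = -ω y x) (hω : ω.Nondegenerate) : Even (finrank K V) := by
  let b := finBasis K V
  have htranspose : (LinearMap.BilinForm.toMatrix b ω).transpose =
      -LinearMap.BilinForm.toMatrix b ω := by
    ext i j
    simpa only [Matrix.transpose_apply, Matrix.neg_apply, LinearMap.BilinForm.toMatrix_apply]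
      using hskew (b j) (b i)
  simpa only [Fintype.card_fin] using even_card_of_transpose_eq_neg_of_det_ne_zero h2 htranspose
    ((LinearMap.BilinForm.nondegenerate_iff_det_ne_zero b).mp hω)

theorem finrank_modEq_finrank_ker_of_skew (h2 : (2 : K) ≠ 0) (hskew : ∀ x y, ω x y = -ω y x) :
    finrank K V ≡ finrank K (LinearMap.ker ω) [MOD 2] := by
  have hrefl : ω.IsRefl := fun x y hxy => by rw [hskew, hxy, neg_zero]
  obtain ⟨W, hW⟩ := Submodule.exists_isCompl (LinearMap.ker ω)
  have heven : finrank K W ≡ 0 [MOD 2] := Nat.even_iff.mp <|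
    even_finrank_of_skew_of_nondegenerate h2 (fun x y => hskew x y)
      (nondegenerate_restrict_of_isCompl_ker hrefl hW)
  rw [← finrank_add_eq_of_isCompl hW]
  exact heven.add_left _

end SkewForm

section Complements

variable {R : Type*} [Ring R]

theorem isCompl_map_mkQ {M : Type*} [AddCommGroup M] [Module R M] {N P Q : Submodule R M}
    (hinf : P ⊓ Q = N) (hsup : P ⊔ Q = ⊤) : IsCompl (P.map N.mkQ) (Q.map N.mkQ) where
  disjoint := by
    have hP : N ≤ P := hinf.ge.trans inf_le_left
    have hQ : N ≤ Q := hinf.ge.trans inf_le_right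
    rw [disjoint_iff, ← (comap_injective_of_surjective N.mkQ_surjective).eq_iff, comap_inf,
      comap_map_mkQ, comap_map_mkQ, sup_eq_right.mpr hP, sup_eq_right.mpr hQ, hinf, comap_bot,
      ker_mkQ]
  codisjoint := by
    rw [codisjoint_iff, ← Submodule.map_sup, hsup, Submodule.map_top, range_mkQ]

theorem isCompl_pi_univ {ι : Type*} {M : ι → Type*} [∀ v, AddCommGroup (M v)]
    [∀ v, Module R (M v)] {P Q : ∀ v, Submodule R (M v)} (h : ∀ v, IsCompl (P v) (Q v)) :
    IsCompl (pi Set.univ P) (pi Set.univ Q) where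
  disjoint := disjoint_def.mpr fun x hP hQ => funext fun v =>
    disjoint_def.mp (h v).disjoint (x v) (hP v trivial) (hQ v trivial)
  codisjoint := codisjoint_iff_exists_add_eq.mpr fun x =>
    ⟨fun v => (P v).projection (Q v) (h v) (x v), fun v => (Q v).projection (P v) (h v).symm (x v),
      fun v _ => projection_apply_mem (h v) _, fun v _ => projection_apply_mem (h v).symm _,
      funext fun v => projection_add_projection_eq_self (h v) (x v)⟩

theorem comap_projection_range {V E : Type*} [AddCommGroup V] [Module R V] [AddCommGroup E]
    [Module R E] {F G : Submodule R E} (hFG : IsCompl F G) (φ : V →ₗ[R] E) :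
    (LinearMap.range φ).comap (F.projection G hFG ∘ₗ φ) = F.comap φ ⊔ G.comap φ := by
  apply le_antisymm
  · rintro x ⟨z, hz⟩
    have hzF : z ∈ F.comap φ := by
      rw [mem_comap, hz]
      exact projection_apply_mem hFG _
    have hzG : x - z ∈ G.comap φ := by
      rw [mem_comap, map_sub, hz, LinearMap.comp_apply, ← projection_eq_self_sub_projection]
      exact projection_apply_mem hFG.symm _
    exact mem_sup.mpr ⟨z, hzF, x - z, hzG, add_sub_cancel z x⟩
  · refine sup_le (fun f hf => ⟨f, ?_⟩) (fun g hg => ⟨0, ?_⟩)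
    · exact (projection_apply_of_mem_left hFG hf).symm
    · exact (map_zero φ).trans (projection_apply_of_mem_right hFG hg).symm

end Complements

section IsotropicComplements

variable {R V E : Type*} [CommRing R] [AddCommGroup V] [Module R V] [AddCommGroup E] [Module R E]
  {F G : Submodule R E}

/-- The bilinear form `(x, y) ↦ β (π (φ x)) (φ y)` on the source of `φ`, where `π` is the projection
onto `F` along `G`. It measures the failure of the range of `φ` to be the sum of its intersections
with `F` and `G`. -/
noncomputable def projectionForm (β : LinearMap.BilinForm R E) (hFG : IsCompl F G)
    (φ : V →ₗ[R] E) : LinearMap.BilinForm R V :=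
  β.compl₁₂ (F.projection G hFG ∘ₗ φ) φ

variable {β : LinearMap.BilinForm R E} {φ : V →ₗ[R] E}

theorem projectionForm_apply (hFG : IsCompl F G) (x y : V) :
    projectionForm β hFG φ x y = β (F.projection G hFG (φ x)) (φ y) :=
  rfl

theorem projectionForm_skew (hβ : β.IsSymm) (hF : F ≤ β.orthogonal F) (hG : G ≤ β.orthogonal G)
    (hFG : IsCompl F G) (hφ : LinearMap.range φ ≤ β.orthogonal (LinearMap.range φ)) (x y : V) :
    projectionForm β hFG φ x y = -projectionForm β hFG φ y x := by
  have hC : β (φ x) (φ y) = 0 := hφ ⟨y, rfl⟩ _ ⟨x, rfl⟩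
  have hFF : β (F.projection G hFG (φ x)) (F.projection G hFG (φ y)) = 0 :=
    hF (projection_apply_mem hFG _) _ (projection_apply_mem hFG _)
  have hGG : β (G.projection F hFG.symm (φ x)) (G.projection F hFG.symm (φ y)) = 0 :=
    hG (projection_apply_mem hFG.symm _) _ (projection_apply_mem hFG.symm _)
  simp only [projection_eq_self_sub_projection hFG, map_sub, LinearMap.sub_apply] at hGG
  rw [projectionForm_apply, projectionForm_apply, hβ.eq (F.projection G hFG (φ y))]
  linear_combination hC + hFF - hGG

theorem ker_projectionForm (hβ : β.IsSymm) (hFG : IsCompl F G)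
    (hφ : β.orthogonal (LinearMap.range φ) = LinearMap.range φ) :
    LinearMap.ker (projectionForm β hFG φ) = F.comap φ ⊔ G.comap φ := by
  rw [← comap_projection_range hFG φ, ← hφ]
  ext x
  simp only [LinearMap.mem_ker, LinearMap.ext_iff, projectionForm_apply, LinearMap.zero_apply,
    mem_comap, LinearMap.comp_apply, LinearMap.BilinForm.mem_orthogonal_iff, LinearMap.mem_range,
    forall_exists_index, forall_apply_eq_imp_iff]
  exact forall_congr' fun y => by rw [hβ.eq]

end IsotropicComplements

theorem finrank_modEq_finrank_comap_sup_comap {K V E : Type*} [Field K] [AddCommGroup V]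
    [Module K V] [FiniteDimensional K V] [AddCommGroup E] [Module K E] (h2 : (2 : K) ≠ 0)
    {β : LinearMap.BilinForm K E} (hβ : β.IsSymm) {F G : Submodule K E}
    (hF : F ≤ β.orthogonal F) (hG : G ≤ β.orthogonal G) (hFG : IsCompl F G) {φ : V →ₗ[K] E}
    (hφ : β.orthogonal (LinearMap.range φ) = LinearMap.range φ) :
    finrank K V ≡ finrank K ↥(F.comap φ ⊔ G.comap φ) [MOD 2] := by
  rw [← ker_projectionForm hβ hFG hφ]
  exact finrank_modEq_finrank_ker_of_skew h2 (projectionForm_skew hβ hF hG hFG hφ.ge)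

section PiForm

variable {R ι : Type*} {M : ι → Type*} [CommRing R] [∀ v, AddCommGroup (M v)]
  [∀ v, Module R (M v)] [Fintype ι] {β : ∀ v, LinearMap.BilinForm R (M v)}
  {βtot : LinearMap.BilinForm R (∀ v, M v)}

theorem isSymm_of_apply_eq_sum (hβtot : ∀ x y, βtot x y = ∑ v, β v (x v) (y v))
    (hβ : ∀ v, (β v).IsSymm) : βtot.IsSymm where
  eq x y := by simp only [hβtot, fun v => (hβ v).eq (x v)]

theorem pi_univ_le_orthogonal (hβtot : ∀ x y, βtot x y = ∑ v, β v (x v) (y v))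
    {P : ∀ v, Submodule R (M v)} (hP : ∀ v, P v ≤ (β v).orthogonal (P v)) :
    pi Set.univ P ≤ βtot.orthogonal (pi Set.univ P) := fun y hy x hx =>
  (hβtot x y).trans <| Finset.sum_eq_zero fun v _ => hP v (hy v trivial) (x v) (hx v trivial)

end PiForm

section SupQuotientInf

variable {R B : Type*} [AddCommGroup B]

/-- The quotient `(F + G)/(F ∩ G)`. -/
abbrev SupQuotientInf [Ring R] [Module R B] (F G : Submodule R B) : Type _ :=
  ↥(F ⊔ G) ⧸ comap (F ⊔ G).subtype (F ⊓ G)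

/-- The image in `(F + G)/(F ∩ G)` of the part of `D` lying in `F + G`. -/
def supQuotientInfImage [Ring R] [Module R B] (F G D : Submodule R B) :
    Submodule R (SupQuotientInf F G) :=
  map (mkQ _) (comap (F ⊔ G).subtype D)

theorem mk_mem_supQuotientInfImage_iff [Ring R] [Module R B] {F G D : Submodule R B}
    (hD : F ⊓ G ≤ D) (x : ↥(F ⊔ G)) :
    (Submodule.Quotient.mk x : SupQuotientInf F G) ∈ supQuotientInfImage F G D ↔ (x : B) ∈ D := by
  have hle : comap (F ⊔ G).subtype (F ⊓ G) ≤ comap (F ⊔ G).subtype D := comap_mono hD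
  rw [← mkQ_apply, ← mem_comap, supQuotientInfImage, comap_map_mkQ, sup_eq_right.mpr hle,
    mem_comap, subtype_apply]

theorem isCompl_supQuotientInfImage [Ring R] [Module R B] (F G : Submodule R B) :
    IsCompl (supQuotientInfImage F G F) (supQuotientInfImage F G G) :=
  isCompl_map_mkQ (comap_inf ..).symm <|
    (submoduleOf_sup_of_le le_sup_left le_sup_right).symm.trans (submoduleOf_self _)

variable [CommRing R] [Module R B] {F G D : Submodule R B} {β : LinearMap.BilinForm R B}
  {βbar : LinearMap.BilinForm R (SupQuotientInf F G)}

theorem isSymm_supQuotientInf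
    (hβbar : ∀ x y : ↥(F ⊔ G),
      βbar (Submodule.Quotient.mk x) (Submodule.Quotient.mk y) = β x y)
    (hβ : β.IsSymm) : βbar.IsSymm where
  eq := by
    rintro ⟨x⟩ ⟨y⟩
    exact (hβbar x y).trans ((hβ.eq x y).trans (hβbar y x).symm)

theorem supQuotientInfImage_le_orthogonal
    (hβbar : ∀ x y : ↥(F ⊔ G),
      βbar (Submodule.Quotient.mk x) (Submodule.Quotient.mk y) = β x y)
    (hD : D ≤ β.orthogonal D) :
    supQuotientInfImage F G D ≤ βbar.orthogonal (supQuotientInfImage F G D) := by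
  rintro _ ⟨y, hy, rfl⟩ _ ⟨x, hx, rfl⟩
  exact (hβbar x y).trans (hD hy x hx)

end SupQuotientInf

section Selmer

variable {R ι H : Type*} {B : ι → Type*} [Ring R] [∀ v, AddCommGroup (B v)]
  [∀ v, Module R (B v)] [AddCommGroup H] [Module R H] {loc : ∀ v, H →ₗ[R] B v}

/-- The Selmer group `Sel(D)` of the classes in `H` which satisfy all local conditions `D v`. -/
def selmer (loc : ∀ v, H →ₗ[R] B v) (D : ∀ v, Submodule R (B v)) : Submodule R H :=
  ⨅ v, comap (loc v) (D v)

variable {D D' F G : ∀ v, Submodule R (B v)}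

theorem mem_selmer {x : H} : x ∈ selmer loc D ↔ ∀ v, loc v x ∈ D v :=
  mem_iInf _

theorem selmer_mono (h : ∀ v, D v ≤ D' v) : selmer loc D ≤ selmer loc D' :=
  iInf_mono fun v => comap_mono (h v)

theorem isNoetherian_of_isNoetherian_selmer [Finite ι] [∀ v, IsNoetherian R (B v)]
    (hD : IsNoetherian R (selmer loc D)) : IsNoetherian R H := by
  have hker : LinearMap.ker (LinearMap.pi loc) ≤ selmer loc D := by
    rw [LinearMap.ker_pi]
    exact iInf_mono fun v => LinearMap.ker_le_comap (loc v)
  have : IsNoetherian R (LinearMap.ker (LinearMap.pi loc)) := isNoetherian_of_le hker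
  exact isNoetherian_of_range_eq_ker (LinearMap.ker (LinearMap.pi loc)).subtype (LinearMap.pi loc)
    (range_subtype _)

theorem comap_pi_supQuotientInfImage
    {φ : selmer loc (fun v => F v ⊔ G v) →ₗ[R] ∀ v, SupQuotientInf (F v) (G v)}
    (hφ : ∀ x v, φ x v = Submodule.Quotient.mk ⟨loc v x, mem_selmer.mp x.2 v⟩)
    (hD : ∀ v, F v ⊓ G v ≤ D v) :
    comap φ (pi Set.univ fun v => supQuotientInfImage (F v) (G v) (D v)) =
      (selmer loc D).submoduleOf (selmer loc fun v => F v ⊔ G v) := by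
  ext x
  simp only [mem_comap, mem_pi, Set.mem_univ, true_imp_iff, hφ,
    mk_mem_supQuotientInfImage_iff (hD _), submoduleOf, subtype_apply, mem_selmer]

end Selmer

theorem two_ne_zero_of_charP_of_odd {R : Type*} [NonAssocRing R] [Nontrivial R] {p : ℕ} [CharP R p]
    (hp : Odd p) : (2 : R) ≠ 0 := fun h2 =>
  zero_ne_one ((CharP.cast_eq_zero R p).symm.trans (natCast_eq_one_of_odd_of_two_eq_zero hp h2))

theorem stmt_2_general {K ι H : Type*} {B : ι → Type*} [Field K] (h2 : (2 : K) ≠ 0) [Fintype ι]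
    [∀ v, AddCommGroup (B v)] [∀ v, Module K (B v)] [AddCommGroup H] [Module K H]
    {β : ∀ v, LinearMap.BilinForm K (B v)} (hβ : ∀ v, (β v).IsSymm)
    {F G : ∀ v, Submodule K (B v)}
    (hF : ∀ v, F v ≤ (β v).orthogonal (F v)) (hG : ∀ v, G v ≤ (β v).orthogonal (G v))
    {loc : ∀ v, H →ₗ[K] B v}
    {βbar : ∀ v, LinearMap.BilinForm K (SupQuotientInf (F v) (G v))}
    (hβbar : ∀ v (x y : ↥(F v ⊔ G v)),
      βbar v (Submodule.Quotient.mk x) (Submodule.Quotient.mk y) = β v x y)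
    {φ : selmer loc (fun v => F v ⊔ G v) →ₗ[K] ∀ v, SupQuotientInf (F v) (G v)}
    (hφ : ∀ x v, φ x v = Submodule.Quotient.mk ⟨loc v x, mem_selmer.mp x.2 v⟩)
    {βtot : LinearMap.BilinForm K (∀ v, SupQuotientInf (F v) (G v))}
    (hβtot : ∀ x y, βtot x y = ∑ v, βbar v (x v) (y v))
    (hdual : βtot.orthogonal (LinearMap.range φ) = LinearMap.range φ)
    [FiniteDimensional K (selmer loc fun v => F v ⊔ G v)] :
    finrank K (selmer loc fun v => F v ⊔ G v) ≡
      finrank K ↥(selmer loc F ⊔ selmer loc G) [MOD 2] := by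
  have hle_F : selmer loc F ≤ selmer loc fun v => F v ⊔ G v := selmer_mono fun _ => le_sup_left
  have hle_G : selmer loc G ≤ selmer loc fun v => F v ⊔ G v := selmer_mono fun _ => le_sup_right
  have hparity := finrank_modEq_finrank_comap_sup_comap h2
    (isSymm_of_apply_eq_sum hβtot fun v => isSymm_supQuotientInf (hβbar v) (hβ v))
    (pi_univ_le_orthogonal hβtot fun v => supQuotientInfImage_le_orthogonal (hβbar v) (hF v))
    (pi_univ_le_orthogonal hβtot fun v => supQuotientInfImage_le_orthogonal (hβbar v) (hG v))
    (isCompl_pi_univ fun v => isCompl_supQuotientInfImage (F v) (G v)) hdual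
  rwa [comap_pi_supQuotientInfImage hφ fun _ => inf_le_left,
    comap_pi_supQuotientInfImage hφ fun _ => inf_le_right, ← submoduleOf_sup_of_le hle_F hle_G,
    (submoduleOfEquivOfLe (sup_le hle_F hle_G)).finrank_eq] at hparity

/-- Abstract Selmer setup with global duality: if `Sel(F∩G)` is
finite-dimensional, then `dim Sel(F+G) ≡ dim (Sel(F) + Sel(G)) (mod 2)`. -/
theorem stmt_2
    (p : ℕ) [Fact p.Prime] (hodd : Odd p)
    (ι : Type) [Fintype ι]
    (B : ι → Type) [∀ v, AddCommGroup (B v)] [∀ v, Module (ZMod p) (B v)]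
    [∀ v, FiniteDimensional (ZMod p) (B v)]
    (β : ∀ v, LinearMap.BilinForm (ZMod p) (B v))
    (hβsymm : ∀ v (x y : B v), β v x y = β v y x)
    (hβnd : ∀ v, (β v).Nondegenerate)
    (F G : ∀ v, Submodule (ZMod p) (B v))
    (hF : ∀ v, (β v).orthogonal (F v) = F v)
    (hG : ∀ v, (β v).orthogonal (G v) = G v)
    (H : Type) [AddCommGroup H] [Module (ZMod p) H]
    (loc : ∀ v, H →ₗ[ZMod p] B v)
    -- the forms induced by the `β v` on the quotients `(F_v + G_v)/(F_v ∩ G_v)`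
    (βbar : ∀ v, LinearMap.BilinForm (ZMod p)
      (↥(F v ⊔ G v) ⧸ Submodule.comap (F v ⊔ G v).subtype (F v ⊓ G v)))
    (hβbar : ∀ v (x y : ↥(F v ⊔ G v)),
      βbar v (Submodule.Quotient.mk x) (Submodule.Quotient.mk y) = β v x y)
    -- the localization map `φ : Sel(F+G) → B̄ = ⊕_v (F_v + G_v)/(F_v ∩ G_v)`
    (φ : ↥(⨅ v, Submodule.comap (loc v) (F v ⊔ G v)) →ₗ[ZMod p]
      ∀ v, ↥(F v ⊔ G v) ⧸ Submodule.comap (F v ⊔ G v).subtype (F v ⊓ G v))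
    (hφ : ∀ x v, φ x v = Submodule.Quotient.mk
      ⟨loc v x, by exact (Submodule.mem_iInf _).mp x.2 v⟩)
    -- the orthogonal direct-sum form on `B̄`
    (βtot : LinearMap.BilinForm (ZMod p)
      (∀ v, ↥(F v ⊔ G v) ⧸ Submodule.comap (F v ⊔ G v).subtype (F v ⊓ G v)))
    (hβtot : ∀ x y, βtot x y = ∑ v, βbar v (x v) (y v))
    -- global duality hypothesis: the image `C` of `Sel(F+G)` in `B̄` is its own
    -- orthogonal complement
    (hdual : βtot.orthogonal (LinearMap.range φ) = LinearMap.range φ)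
    -- `Sel(F∩G)` is finite-dimensional
    (hfin : FiniteDimensional (ZMod p) ↥(⨅ v, Submodule.comap (loc v) (F v ⊓ G v))) :
    finrank (ZMod p) ↥(⨅ v, Submodule.comap (loc v) (F v ⊔ G v)) ≡
      finrank (ZMod p)
        ↥((⨅ v, Submodule.comap (loc v) (F v)) ⊔ (⨅ v, Submodule.comap (loc v) (G v)))
      [MOD 2] := by
  have : IsNoetherian (ZMod p) H :=
    isNoetherian_of_isNoetherian_selmer (IsNoetherian.iff_fg.mpr hfin)
  exact stmt_2_general (two_ne_zero_of_charP_of_odd hodd) (fun v => ⟨hβsymm v⟩) (fun v => (hF v).ge)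
    (fun v => (hG v).ge) hβbar hφ hβtot hdual
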